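/- The gradient of the multilinear potential is Lipschitz on the cube: for all x, y ∈ [0,1]^{n×m}, ‖∇Φ(x) − ∇Φ(y)‖₂ ≤ 2 n² √m · c_max · ‖x − y‖₂. -/

import Mathlib

/-!
STATEMENT 7: The gradient of the multilinear potential is Lipschitz on the cube:
for all `x, y ∈ [0,1]^{n×m}`, `‖∇Φ(x) − ∇Φ(y)‖₂ ≤ 2 n² √m · c_max · ‖x − y‖₂`,
where `‖·‖₂` is the Euclidean norm on `ℝ^{n×m}`.
-/

open Finset

noncomputable section

/-- The multilinear potential. -/
def multilinearPotential (n m : ℕ) (c : Fin m → ℕ → ℝ) (x : Fin n → Fin m → ℝ) : ℝ :=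
  ∑ e : Fin m, ∑ S : Finset (Fin n),
    (∏ j ∈ S, x j e) * (∏ j ∈ Sᶜ, (1 - x j e)) *
      (∑ l ∈ Finset.range (S.card + 1), c e l)

/-!
Each resource contributes to `Φ` the multilinear extension of a set function, namely the expectation
of that function at a random set of agents. Such an extension is affine in every coordinate, its
slope being the extension of a discrete derivative. Differentiating twice, the Hessian of `Φ` is
block diagonal over the resources, every block has zero diagonal, and each of its off-diagonal
entries is an average of increments `c_e(k+1) - c_e(k)`. If these are bounded by `L`, then every
block has operator norm at most `(n - 1) L`. Because the slopes are exact, changing one coordinate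
at a time compares the gradients at two points of the cube without a mean value theorem.
-/

/-- Rosenthal's potential of a single resource with cost function `c`, as a function of the set `S`
of agents using it. The sum starts at `c 0`, as in `multilinearPotential`. -/
def cumulativeCost {ι M : Type*} [AddCommMonoid M] (c : ℕ → M) (S : Finset ι) : M :=
  ∑ l ∈ range (#S + 1), c l

section DiscreteDerivative

variable {ι M : Type*} [DecidableEq ι] [AddCommGroup M]

/-- The discrete derivative of a set function `f` in direction `i`: the slope of the multilinear
extension of `f` in coordinate `i` is the multilinear extension of this function. Inserting and
erasing `i` makes its value independent of whether `i ∈ S`. -/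
def discreteDeriv (i : ι) (f : Finset ι → M) (S : Finset ι) : M :=
  f (insert i S) - f (S.erase i)

lemma discreteDeriv_discreteDeriv_self (f : Finset ι → M) (i : ι) (S : Finset ι) :
    discreteDeriv i (discreteDeriv i f) S = 0 := by
  have insert_erase_eq_insert : insert i (S.erase i) = insert i S := by grind
  simp [discreteDeriv, insert_erase_eq_insert]

lemma card_insert_eq_card_erase_add_one (i : ι) (S : Finset ι) :
    #(insert i S) = #(S.erase i) + 1 := by
  rw [← erase_insert_eq_erase, card_erase_add_one (mem_insert_self i S)]

lemma discreteDeriv_cumulativeCost (c : ℕ → M) (i : ι) (S : Finset ι) :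
    discreteDeriv i (cumulativeCost c) S = c (#(S.erase i) + 1) := by
  rw [discreteDeriv, cumulativeCost, cumulativeCost, card_insert_eq_card_erase_add_one,
    sum_range_succ, add_sub_cancel_left]

lemma discreteDeriv_discreteDeriv_cumulativeCost {i j : ι} (hij : i ≠ j) (c : ℕ → M)
    (S : Finset ι) :
    discreteDeriv j (discreteDeriv i (cumulativeCost c)) S =
      c (#((S.erase i).erase j) + 2) - c (#((S.erase i).erase j) + 1) := by
  have card_erase_insert : #((insert j S).erase i) = #((S.erase i).erase j) + 1 := by
    rw [erase_insert_of_ne hij.symm, card_insert_eq_card_erase_add_one]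
  rw [discreteDeriv, discreteDeriv_cumulativeCost, discreteDeriv_cumulativeCost,
    card_erase_insert, erase_right_comm]

end DiscreteDerivative

section MultilinearExtension

variable {ι R : Type*} [Fintype ι] [DecidableEq ι] [CommRing R]

/-- The multilinear extension of a set function `f`: on the cube, the expectation of `f` at the
random set containing each `j` independently with probability `z j`. -/
def multilinearExtension (f : Finset ι → R) (z : ι → R) : R :=
  ∑ S, (∏ j ∈ S, z j) * (∏ j ∈ Sᶜ, (1 - z j)) * f S

lemma sum_multilinear_weights_eq_one (z : ι → R) :
    ∑ S, (∏ j ∈ S, z j) * ∏ j ∈ Sᶜ, (1 - z j) = 1 := by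
  simp [← Fintype.prod_add]

lemma multilinearExtension_eq_sum_powerset_erase (f : Finset ι → R) (z : ι → R) (i : ι) :
    multilinearExtension f z = ∑ S ∈ (univ.erase i).powerset,
      (∏ j ∈ S, z j) * (∏ j ∈ Sᶜ.erase i, (1 - z j)) *
        ((1 - z i) * f S + z i * f (insert i S)) := by
  rw [multilinearExtension, ← powerset_univ]
  nth_rw 1 [← insert_erase (mem_univ i)]
  rw [sum_powerset_insert (notMem_erase i univ), ← sum_add_distrib]
  refine sum_congr rfl fun S hS ↦ ?_
  have hi : i ∉ S := fun h ↦ notMem_erase i univ (mem_powerset.1 hS h)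
  rw [← mul_prod_erase Sᶜ _ (mem_compl.2 hi), prod_insert hi, compl_insert]
  ring

lemma multilinearExtension_update (f : Finset ι → R) (z : ι → R) (i : ι) (t : R) :
    multilinearExtension f (Function.update z i t) =
      multilinearExtension f z + (t - z i) * multilinearExtension (discreteDeriv i f) z := by
  simp only [multilinearExtension_eq_sum_powerset_erase _ _ i, mul_sum, ← sum_add_distrib]
  refine sum_congr rfl fun S hS ↦ ?_
  have hi : i ∉ S := fun h ↦ notMem_erase i univ (mem_powerset.1 hS h)
  have prod_compl_update : ∏ j ∈ Sᶜ.erase i, (1 - Function.update z i t j) =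
      ∏ j ∈ Sᶜ.erase i, (1 - z j) :=
    prod_congr rfl fun j hj ↦ by rw [Function.update_of_ne (ne_of_mem_erase hj)]
  simp only [prod_update_of_notMem hi, prod_compl_update, Function.update_self, discreteDeriv,
    insert_idem, erase_insert hi, erase_eq_of_notMem hi]
  ring

variable [LinearOrder R] [IsStrictOrderedRing R]

lemma abs_multilinearExtension_le {f : Finset ι → R} {z : ι → R} {b : R}
    (hf : ∀ S, |f S| ≤ b) (hz : z ∈ Set.Icc 0 1) : |multilinearExtension f z| ≤ b := by
  have weight_nonneg (S : Finset ι) : 0 ≤ (∏ j ∈ S, z j) * ∏ j ∈ Sᶜ, (1 - z j) :=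
    mul_nonneg (prod_nonneg fun j _ ↦ hz.1 j) (prod_nonneg fun j _ ↦ sub_nonneg.2 (hz.2 j))
  calc |multilinearExtension f z|
      ≤ ∑ S, |(∏ j ∈ S, z j) * (∏ j ∈ Sᶜ, (1 - z j)) * f S| := abs_sum_le_sum_abs _ _
    _ ≤ ∑ S, (∏ j ∈ S, z j) * (∏ j ∈ Sᶜ, (1 - z j)) * b := by
        gcongr with S
        rw [abs_mul, abs_of_nonneg (weight_nonneg S)]
        exact mul_le_mul_of_nonneg_left (hf S) (weight_nonneg S)
    _ = b := by rw [← sum_mul, sum_multilinear_weights_eq_one, one_mul]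

lemma abs_multilinearExtension_sub_le {f : Finset ι → R} {b x y : ι → R}
    (hf : ∀ j S, |discreteDeriv j f S| ≤ b j) (hx : x ∈ Set.Icc 0 1) (hy : y ∈ Set.Icc 0 1) :
    |multilinearExtension f x - multilinearExtension f y| ≤ ∑ j, b j * |x j - y j| := by
  suffices piecewise_sub_le : ∀ s : Finset ι,
      |multilinearExtension f (s.piecewise x y) - multilinearExtension f y| ≤
        ∑ j ∈ s, b j * |x j - y j| by
    simpa using piecewise_sub_le univ
  intro s
  induction s using Finset.induction_on with
  | empty => simp
  | insert i s hi ih =>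
    have hz : s.piecewise x y ∈ Set.Icc 0 1 := s.piecewise_mem_Icc_of_mem_of_mem hx hy
    rw [piecewise_insert, multilinearExtension_update, piecewise_eq_of_notMem _ _ _ hi,
      sum_insert hi, add_sub_right_comm, add_comm]
    refine (abs_add_le _ _).trans (add_le_add ?_ ih)
    rw [abs_mul, mul_comm]
    exact mul_le_mul_of_nonneg_right (abs_multilinearExtension_le (hf i) hz) (abs_nonneg _)

end MultilinearExtension

lemma sum_sq_sum_erase_le {ι R : Type*} [Fintype ι] [DecidableEq ι] [CommRing R] [LinearOrder R]
    [IsStrictOrderedRing R] (a : ι → R) :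
    ∑ i, (∑ j ∈ univ.erase i, a j) ^ 2 ≤ ((Fintype.card ι : R) - 1) ^ 2 * ∑ i, a i ^ 2 := by
  calc ∑ i, (∑ j ∈ univ.erase i, a j) ^ 2
      ≤ ∑ i, ((Fintype.card ι : R) - 1) * ∑ j ∈ univ.erase i, a j ^ 2 := by
        gcongr with i
        rw [← card_univ, ← cast_card_erase_of_mem (mem_univ i)]
        exact sq_sum_le_card_mul_sum_sq
    _ = ((Fintype.card ι : R) - 1) ^ 2 * ∑ i, a i ^ 2 := by
        simp only [← mul_sum, sum_erase_eq_sub (mem_univ _), sum_sub_distrib, sum_const,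
          card_univ, nsmul_eq_mul]
        ring

section CumulativeCost

variable {ι R : Type*} [Fintype ι] [DecidableEq ι] [CommRing R] [LinearOrder R]
  [IsStrictOrderedRing R] {c : ℕ → R} {L : R} {x y : ι → R}

lemma abs_multilinearExtension_discreteDeriv_cumulativeCost_sub_le
    (hc : ∀ k, |c (k + 1) - c k| ≤ L) (hx : x ∈ Set.Icc 0 1) (hy : y ∈ Set.Icc 0 1) (i : ι) :
    |multilinearExtension (discreteDeriv i (cumulativeCost c)) x -
        multilinearExtension (discreteDeriv i (cumulativeCost c)) y| ≤
      L * ∑ j ∈ univ.erase i, |x j - y j| := by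
  have second_deriv_le (j : ι) (S : Finset ι) :
      |discreteDeriv j (discreteDeriv i (cumulativeCost c)) S| ≤ if j = i then 0 else L := by
    split_ifs with h
    · rw [h, discreteDeriv_discreteDeriv_self, abs_zero]
    · rw [discreteDeriv_discreteDeriv_cumulativeCost (Ne.symm h)]
      exact hc _
  refine (abs_multilinearExtension_sub_le second_deriv_le hx hy).trans_eq ?_
  rw [← add_sum_erase univ _ (mem_univ i), if_pos rfl, zero_mul, zero_add, mul_sum]
  exact sum_congr rfl fun j hj ↦ by rw [if_neg (ne_of_mem_erase hj)]

lemma sum_sq_multilinearExtension_discreteDeriv_cumulativeCost_sub_le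
    (hc : ∀ k, |c (k + 1) - c k| ≤ L) (hx : x ∈ Set.Icc 0 1) (hy : y ∈ Set.Icc 0 1) :
    ∑ i, (multilinearExtension (discreteDeriv i (cumulativeCost c)) x -
        multilinearExtension (discreteDeriv i (cumulativeCost c)) y) ^ 2 ≤
      (((Fintype.card ι : R) - 1) * L) ^ 2 * ∑ i, (x i - y i) ^ 2 := by
  calc _ ≤ ∑ i, (L * ∑ j ∈ univ.erase i, |x j - y j|) ^ 2 := by
        gcongr ∑ i, ?_ with i
        rw [← sq_abs]
        gcongr
        exact abs_multilinearExtension_discreteDeriv_cumulativeCost_sub_le hc hx hy i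
    _ = L ^ 2 * ∑ i, (∑ j ∈ univ.erase i, |x j - y j|) ^ 2 := by simp only [mul_pow, ← mul_sum]
    _ ≤ L ^ 2 * (((Fintype.card ι : R) - 1) ^ 2 * ∑ i, |x i - y i| ^ 2) := by
        gcongr
        exact sum_sq_sum_erase_le _
    _ = (((Fintype.card ι : R) - 1) * L) ^ 2 * ∑ i, (x i - y i) ^ 2 := by
        simp only [sq_abs]
        ring

end CumulativeCost

section Potential

variable {n m : ℕ}

lemma multilinearPotential_eq_sum_multilinearExtension (c : Fin m → ℕ → ℝ)
    (x : Fin n → Fin m → ℝ) :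
    multilinearPotential n m c x =
      ∑ e, multilinearExtension (cumulativeCost (c e)) fun j ↦ x j e :=
  rfl

lemma differentiable_multilinearPotential (c : Fin m → ℕ → ℝ) :
    Differentiable ℝ (multilinearPotential n m c) := by
  unfold multilinearPotential
  fun_prop

lemma multilinearPotential_add_smul_single (c : Fin m → ℕ → ℝ) (x : Fin n → Fin m → ℝ)
    (i : Fin n) (e : Fin m) (t : ℝ) :
    multilinearPotential n m c (x + t • (Pi.single i (Pi.single e 1) : Fin n → Fin m → ℝ)) =
      multilinearPotential n m c x +
        t * multilinearExtension (discreteDeriv i (cumulativeCost (c e))) fun j ↦ x j e := by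
  have column (e' : Fin m) :
      (fun j ↦ (x + t • (Pi.single i (Pi.single e 1) : Fin n → Fin m → ℝ)) j e') =
        Function.update (fun j ↦ x j e') i (x i e' + if e' = e then t else 0) := by
    ext j
    rcases eq_or_ne j i with rfl | hj
    · simp [Pi.single_apply]
    · simp [hj]
  simp only [multilinearPotential_eq_sum_multilinearExtension, column,
    multilinearExtension_update, add_sub_cancel_left, sum_add_distrib, ite_mul, zero_mul,
    sum_ite_eq', mem_univ, if_true]

lemma fderiv_multilinearPotential_single (c : Fin m → ℕ → ℝ) (x : Fin n → Fin m → ℝ)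
    (i : Fin n) (e : Fin m) :
    fderiv ℝ (multilinearPotential n m c) x (Pi.single i (Pi.single e 1)) =
      multilinearExtension (discreteDeriv i (cumulativeCost (c e))) fun j ↦ x j e := by
  rw [← (differentiable_multilinearPotential c x).lineDeriv_eq_fderiv, lineDeriv]
  simp [multilinearPotential_add_smul_single]

end Potential

lemma sub_one_le_two_mul_sq_mul_sqrt (n : ℕ) {m : ℕ} (hm : 0 < m) :
    (n : ℝ) - 1 ≤ 2 * (n : ℝ) ^ 2 * Real.sqrt (m : ℝ) := by
  have sqrt_ge : 1 ≤ Real.sqrt (m : ℝ) := Real.one_le_sqrt.2 (mod_cast hm)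
  calc (n : ℝ) - 1 ≤ 2 * (n : ℝ) ^ 2 * 1 := by nlinarith
    _ ≤ 2 * (n : ℝ) ^ 2 * Real.sqrt (m : ℝ) := by gcongr

theorem multilinear_potential_gradient_lipschitz_general
    (n m : ℕ) (c : Fin m → ℕ → ℝ) (L : ℝ)
    (hc : ∀ e k, |c e (k + 1) - c e k| ≤ L)
    (x y : Fin n → Fin m → ℝ)
    (hx : ∀ i e, 0 ≤ x i e ∧ x i e ≤ 1)
    (hy : ∀ i e, 0 ≤ y i e ∧ y i e ≤ 1) :
    Real.sqrt (∑ i : Fin n, ∑ e : Fin m,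
        (fderiv ℝ (multilinearPotential n m c) x (Pi.single i (Pi.single e 1))
          - fderiv ℝ (multilinearPotential n m c) y (Pi.single i (Pi.single e 1))) ^ 2)
      ≤ ((n : ℝ) - 1) * L * Real.sqrt (∑ i : Fin n, ∑ e : Fin m, (x i e - y i e) ^ 2) := by
  rcases isEmpty_or_nonempty (Fin n) with _ | ⟨⟨i₀⟩⟩
  · simp
  rcases isEmpty_or_nonempty (Fin m) with _ | ⟨⟨e₀⟩⟩
  · simp
  have constant_nonneg : 0 ≤ ((n : ℝ) - 1) * L :=
    mul_nonneg (sub_nonneg.2 (mod_cast i₀.pos)) ((abs_nonneg _).trans (hc e₀ 0))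
  rw [← Real.sqrt_sq constant_nonneg, ← Real.sqrt_mul (sq_nonneg _)]
  refine Real.sqrt_le_sqrt ?_
  simp only [fderiv_multilinearPotential_single]
  rw [sum_comm, sum_comm (f := fun i e ↦ (x i e - y i e) ^ 2), mul_sum]
  refine sum_le_sum fun e _ ↦ ?_
  simpa using sum_sq_multilinearExtension_discreteDeriv_cumulativeCost_sub_le (hc e)
    (x := fun j ↦ x j e) (y := fun j ↦ y j e)
    ⟨fun j ↦ (hx j e).1, fun j ↦ (hx j e).2⟩ ⟨fun j ↦ (hy j e).1, fun j ↦ (hy j e).2⟩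

theorem multilinear_potential_gradient_lipschitz
    (n m : ℕ) (c : Fin m → ℕ → ℝ) (cmax : ℝ)
    (hmono : ∀ e, Monotone (c e))
    (hc : ∀ e k, 0 ≤ c e k ∧ c e k ≤ cmax)
    (x y : Fin n → Fin m → ℝ)
    (hx : ∀ i e, 0 ≤ x i e ∧ x i e ≤ 1)
    (hy : ∀ i e, 0 ≤ y i e ∧ y i e ≤ 1) :
    Real.sqrt (∑ i : Fin n, ∑ e : Fin m,
        (fderiv ℝ (multilinearPotential n m c) x (Pi.single i (Pi.single e 1))
          - fderiv ℝ (multilinearPotential n m c) y (Pi.single i (Pi.single e 1))) ^ 2)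
      ≤ 2 * (n : ℝ) ^ 2 * Real.sqrt (m : ℝ) * cmax *
          Real.sqrt (∑ i : Fin n, ∑ e : Fin m, (x i e - y i e) ^ 2) := by
  rcases isEmpty_or_nonempty (Fin m) with _ | ⟨⟨e⟩⟩
  · simp
  have increment_le (e : Fin m) (k : ℕ) : |c e (k + 1) - c e k| ≤ cmax :=
    abs_sub_le_of_nonneg_of_le (hc e _).1 (hc e _).2 (hc e k).1 (hc e k).2
  have sharper_bound :=
    multilinear_potential_gradient_lipschitz_general n m c cmax increment_le x y hx hy
  refine sharper_bound.trans ?_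
  gcongr
  · exact (hc e 0).1.trans (hc e 0).2
  · exact sub_one_le_two_mul_sq_mul_sqrt n e.pos

end
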